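/- arXiv:2509.00296 — 2 statements merged into one kernel-verified Lean document; each statement's English description precedes it below -/
import Mathlib

section
/- Let k ≥ 0 and m ≥ k+1 be integers, and define the polynomial r_m(x) = ∑_{s=0}^{⌈(m-k)/2⌉ - 1} β_{m-2s,s} L_{m-2s}(x), where β_{q,s} = (2q+1)·(q+2s)! / ( (2s)!! · (2(q+s)+1)!! ). Then x^m − r_m(x) is a polynomial of degree at most k, and ∫_{-1}^{1} r_m(x) p(x) dx = 0 for every polynomial p of degree at most k; that is, r_m equals the error x^m − Π_k(x^m) of the L²([-1,1])-orthogonal projection Π_k of x^m onto polynomials of degree at most k. -/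
/-!
Write `c q s = (q+2s)! / ((2s)!! (2(q+s)+1)!!)`, so that `β_{q,s} = (2q+1) c q s`. Everything rests
on the recurrence `(2q+1) c_{q,s} = q c_{q-1,s} + (q+1) c_{q+1,s-1}` (`momentCoeff_rec` and its
boundary cases), which enters twice.

* Together with `(2q+1) x L_q = (q+1) L_{q+1} + q L_{q-1}` it gives, by induction on `m`, the
  complete Legendre expansion `x^m = ∑_{2s ≤ m} β_{m-2s,s} L_{m-2s}` (`X_pow_eq_sum_legendre`).
  The terms of this expansion that are missing from `r_m` are those with `m - 2s ≤ k`, whence the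
  degree bound on `x^m - r_m`.
* Together with the defining recurrence of `L_q` it gives, by induction on `q`, the moments
  `∫ L_q x^{q+2s} = 2 c_{q,s}`, along with `∫ L_q x^j = 0` for `j < q` or `q + j` odd
  (`legendre_moments`). The vanishing for `j < q` is the orthogonality of `L_q` to all polynomials
  of degree less than `q`, and every `L_{m-2s}` occurring in `r_m` has `m - 2s > k`.
-/

/-- The Legendre polynomials, defined by the recurrence
`L₀ = 1`, `L₁ = X`, `(k+1) L_{k+1}(x) = (2k+1) x L_k(x) - k L_{k-1}(x)`. -/
noncomputable def legendre : ℕ → Polynomial ℝ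
  | 0 => 1
  | 1 => Polynomial.X
  | (k + 2) =>
      Polynomial.C ((2 * (k : ℝ) + 3) / ((k : ℝ) + 2)) * (Polynomial.X * legendre (k + 1))
        - Polynomial.C (((k : ℝ) + 1) / ((k : ℝ) + 2)) * legendre k

/-- The even double factorial `(2s)!! = 2^s · s!` (as a real number). -/
noncomputable def evenDoubleFactorial (s : ℕ) : ℝ := 2 ^ s * (Nat.factorial s : ℝ)

/-- The odd double factorial `(2m+1)!! = (2m+1)!/(2^m · m!)` (as a real number). -/
noncomputable def oddDoubleFactorial (m : ℕ) : ℝ :=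
  (Nat.factorial (2 * m + 1) : ℝ) / (2 ^ m * (Nat.factorial m : ℝ))

/-- The coefficient `β_{q,s} = (2q+1)·(q+2s)! / ((2s)!! · (2(q+s)+1)!!)`. -/
noncomputable def betaCoeff (q s : ℕ) : ℝ :=
  (2 * (q : ℝ) + 1) * (Nat.factorial (q + 2 * s) : ℝ)
    / (evenDoubleFactorial s * oddDoubleFactorial (q + s))

open Polynomial Finset

/-! ### The coefficients -/

/-- The number `c_{q,s} = β_{q,s} / (2q+1)`; it is half the moment `∫ L_q x^{q+2s}` over
`[-1,1]`. -/
noncomputable def momentCoeff (q s : ℕ) : ℝ :=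
  (Nat.factorial (q + 2 * s) : ℝ) / (evenDoubleFactorial s * oddDoubleFactorial (q + s))

lemma betaCoeff_eq (q s : ℕ) : betaCoeff q s = (2 * (q : ℝ) + 1) * momentCoeff q s := by
  rw [betaCoeff, momentCoeff, mul_div_assoc]

lemma evenDoubleFactorial_pos (s : ℕ) : 0 < evenDoubleFactorial s := by
  unfold evenDoubleFactorial; positivity

lemma oddDoubleFactorial_pos (n : ℕ) : 0 < oddDoubleFactorial n := by
  unfold oddDoubleFactorial; positivity

lemma evenDoubleFactorial_succ (s : ℕ) :
    evenDoubleFactorial (s + 1) = (2 * (s : ℝ) + 2) * evenDoubleFactorial s := by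
  simp only [evenDoubleFactorial, Nat.factorial_succ, pow_succ]
  push_cast
  ring

lemma oddDoubleFactorial_succ (n : ℕ) :
    oddDoubleFactorial (n + 1) = (2 * (n : ℝ) + 3) * oddDoubleFactorial n := by
  have h : 2 * (n + 1) + 1 = 2 * n + 1 + 1 + 1 := by ring
  simp only [oddDoubleFactorial, h, Nat.factorial_succ (2 * n + 1 + 1),
    Nat.factorial_succ (2 * n + 1), Nat.factorial_succ n, pow_succ]
  push_cast
  field_simp
  ring

lemma momentCoeff_rec (q s : ℕ) :
    (2 * (q : ℝ) + 3) * momentCoeff (q + 1) (s + 1)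
      = ((q : ℝ) + 1) * momentCoeff q (s + 1) + ((q : ℝ) + 2) * momentCoeff (q + 2) s := by
  have h1 : q + 1 + 2 * (s + 1) = q + 2 * s + 2 + 1 := by ring
  have h2 : q + 2 * (s + 1) = q + 2 * s + 2 := by ring
  have h3 : q + 2 + 2 * s = q + 2 * s + 2 := by ring
  have h4 : q + 1 + (s + 1) = q + s + 1 + 1 := by ring
  have h5 : q + (s + 1) = q + s + 1 := by ring
  have h6 : q + 2 + s = q + s + 1 + 1 := by ring
  simp only [momentCoeff, h1, h2, h3, h4, h5, h6, Nat.factorial_succ (q + 2 * s + 2),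
    oddDoubleFactorial_succ (q + s + 1), evenDoubleFactorial_succ]
  have := (evenDoubleFactorial_pos s).ne'
  have := (oddDoubleFactorial_pos (q + s + 1)).ne'
  push_cast
  have : (2 * ((q : ℝ) + s + 1) + 3) ≠ 0 := by positivity
  field_simp
  ring

lemma momentCoeff_rec_zero (q : ℕ) :
    (2 * (q : ℝ) + 3) * momentCoeff (q + 1) 0 = ((q : ℝ) + 1) * momentCoeff q 0 := by
  simp only [momentCoeff, mul_zero, add_zero, Nat.factorial_succ, oddDoubleFactorial_succ]
  have := (evenDoubleFactorial_pos 0).ne'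
  have := (oddDoubleFactorial_pos q).ne'
  push_cast
  field_simp

lemma momentCoeff_zero_succ (s : ℕ) : momentCoeff 0 (s + 1) = momentCoeff 1 s := by
  have h1 : 0 + 2 * (s + 1) = 1 + 2 * s + 1 := by ring
  have h2 : 0 + (s + 1) = 1 + s := by ring
  simp only [momentCoeff, h1, h2, Nat.factorial_succ (1 + 2 * s), evenDoubleFactorial_succ]
  have := (evenDoubleFactorial_pos s).ne'
  have := (oddDoubleFactorial_pos (1 + s)).ne'
  push_cast
  field_simp
  ring

lemma momentCoeff_zero_eq (s : ℕ) : momentCoeff 0 s = 1 / (2 * (s : ℝ) + 1) := by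
  simp only [momentCoeff, evenDoubleFactorial, oddDoubleFactorial, zero_add, Nat.factorial_succ]
  push_cast
  field_simp

/-! ### The Legendre expansion of a monomial -/

/-- The three-term recurrence solved for `x L_q`. For `q = 0` the term `L_{q-1}` has coefficient
zero, so the truncated subtraction is harmless. -/
lemma X_mul_legendre (q : ℕ) :
    C (2 * (q : ℝ) + 1) * (X * legendre q)
      = C ((q : ℝ) + 1) * legendre (q + 1) + C (q : ℝ) * legendre (q - 1) := by
  rcases q with _ | q
  · simp [legendre]
  · have h : (q : ℝ) + 2 ≠ 0 := by positivity
    have e1 : (2 * ((q : ℝ) + 1) + 1) = ((q : ℝ) + 2) * ((2 * (q : ℝ) + 3) / ((q : ℝ) + 2)) := by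
      field_simp; ring
    have e2 : (q : ℝ) + 1 = ((q : ℝ) + 2) * (((q : ℝ) + 1) / ((q : ℝ) + 2)) := by
      field_simp
    have e3 : (q : ℝ) + 1 + 1 = (q : ℝ) + 2 := by ring
    rw [legendre, Nat.add_sub_cancel, Nat.cast_succ, e1, e3]
    have e4 : (C ((q : ℝ) + 1) : ℝ[X])
        = C ((q : ℝ) + 2) * C (((q : ℝ) + 1) / ((q : ℝ) + 2)) := by
      rw [← C_mul, ← e2]
    simp only [C_mul]
    linear_combination (-legendre q) * e4

lemma degree_legendre_le (q : ℕ) : (legendre q).degree ≤ (q : WithBot ℕ) := by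
  induction q using Nat.twoStepInduction with
  | zero => simp [legendre]
  | one => simp [legendre]
  | more q ih0 ih1 =>
    rw [← natDegree_le_iff_degree_le] at *
    rw [legendre]
    refine (natDegree_sub_le _ _).trans (max_le ?_ ?_)
    · refine (natDegree_C_mul_le _ _).trans (natDegree_mul_le.trans ?_)
      rw [natDegree_X]
      omega
    · refine (natDegree_C_mul_le _ _).trans ?_
      omega

/-- Multiplying a partial sum of the expansion of `x^m`, `m = q + 2n`, by `x` gives the partial sum
of the expansion of `x^{m+1}` and one boundary term. -/
lemma X_mul_partial_sum (n : ℕ) : ∀ q : ℕ,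
    X * ∑ s ∈ range (n + 1),
        C (betaCoeff (q + 2 * n - 2 * s) s) * legendre (q + 2 * n - 2 * s)
      = ∑ s ∈ range (n + 1),
          C (betaCoeff (q + 2 * n + 1 - 2 * s) s) * legendre (q + 2 * n + 1 - 2 * s)
        + C ((q : ℝ) * momentCoeff q n) * legendre (q - 1) := by
  induction n with
  | zero =>
    intro q
    have hx := X_mul_legendre q
    have hb : betaCoeff (q + 1) 0 = ((q : ℝ) + 1) * momentCoeff q 0 := by
      rw [betaCoeff_eq, ← momentCoeff_rec_zero]; push_cast; ring
    simp only [zero_add, sum_range_one, mul_zero, add_zero, Nat.sub_zero, hb]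
    simp only [betaCoeff_eq, C_mul] at hx ⊢
    linear_combination C (momentCoeff q 0) * hx
  | succ n ih =>
    intro q
    have hx := X_mul_legendre q
    have hb : betaCoeff (q + 1) (n + 1)
        = ((q : ℝ) + 1) * momentCoeff q (n + 1) + ((q : ℝ) + 2) * momentCoeff (q + 2) n := by
      rw [betaCoeff_eq, ← momentCoeff_rec]; push_cast; ring
    have e1 : q + 2 * (n + 1) = q + 2 + 2 * n := by ring
    have e2 : q + 2 + 2 * n - 2 * (n + 1) = q := by omega
    have e3 : q + 2 + 2 * n + 1 - 2 * (n + 1) = q + 1 := by omega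
    rw [sum_range_succ, sum_range_succ _ (n + 1), e1, mul_add, ih (q + 2), e2, e3, hb,
      show q + 2 - 1 = q + 1 by omega]
    push_cast
    simp only [betaCoeff_eq, C_mul, C_add] at hx ⊢
    linear_combination C (momentCoeff q (n + 1)) * hx

lemma X_pow_eq_sum_legendre (m : ℕ) :
    (X : ℝ[X]) ^ m
      = ∑ s ∈ range (m / 2 + 1), C (betaCoeff (m - 2 * s) s) * legendre (m - 2 * s) := by
  induction m with
  | zero =>
    simp [legendre, betaCoeff_eq, momentCoeff_zero_eq]
  | succ m ih =>
    rw [pow_succ', ih]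
    obtain ⟨n, rfl | rfl⟩ := Nat.even_or_odd' m
    · have h := X_mul_partial_sum n 0
      rw [show 2 * n / 2 = n by omega, show (2 * n + 1) / 2 = n by omega]
      simpa using h
    · -- For odd `m` the boundary term is the new constant term of the expansion.
      have h := X_mul_partial_sum n 1
      rw [show (2 * n + 1) / 2 = n by omega, show (2 * n + 1 + 1) / 2 = n + 1 by omega,
        sum_range_succ _ (n + 1), show 2 * n + 1 + 1 - 2 * (n + 1) = 0 by omega,
        betaCoeff_eq 0, momentCoeff_zero_succ]
      simpa [add_comm 1 (2 * n)] using h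

/-! ### Moments and orthogonality -/

/-- The moment `∫ L_q x^j` over `[-1,1]`. -/
noncomputable def legendreMoment (q j : ℕ) : ℝ :=
  ∫ x in (-1 : ℝ)..1, (legendre q).eval x * x ^ j

lemma legendreMoment_rec (q j : ℕ) :
    ((q : ℝ) + 2) * legendreMoment (q + 2) j
      = (2 * (q : ℝ) + 3) * legendreMoment (q + 1) (j + 1)
        - ((q : ℝ) + 1) * legendreMoment q j := by
  have h : (q : ℝ) + 2 ≠ 0 := by positivity
  have hi : ∀ q j : ℕ, IntervalIntegrable (fun x : ℝ => (legendre q).eval x * x ^ j)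
      MeasureTheory.volume (-1) 1 := fun q j =>
    ((legendre q).continuous.mul (continuous_pow j)).intervalIntegrable _ _
  simp only [legendreMoment]
  rw [← intervalIntegral.integral_const_mul, ← intervalIntegral.integral_const_mul,
    ← intervalIntegral.integral_const_mul,
    ← intervalIntegral.integral_sub ((hi _ _).const_mul _) ((hi _ _).const_mul _)]
  congr 1
  ext x
  simp only [legendre, eval_sub, eval_mul, eval_C, eval_X]
  field_simp
  ring

lemma integral_pow_even (s : ℕ) : ∫ x in (-1 : ℝ)..1, x ^ (2 * s) = 2 * momentCoeff 0 s := by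
  rw [integral_pow, momentCoeff_zero_eq, Odd.neg_one_pow ⟨s, rfl⟩]
  push_cast
  ring

lemma integral_pow_odd {j : ℕ} (hj : Odd j) : ∫ x in (-1 : ℝ)..1, x ^ j = 0 := by
  rw [integral_pow, (hj.add_odd odd_one).neg_one_pow]
  simp

/-- All moments of `L_q`. The three cases have to be proved together: the vanishing of
`∫ L_{q+2} x^q` is a cancellation between the nonzero moments `∫ L_{q+1} x^{q+1}` and
`∫ L_q x^q`. -/
lemma legendre_moments (q : ℕ) :
    (∀ j, Odd (q + j) → legendreMoment q j = 0) ∧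
    (∀ j, j < q → legendreMoment q j = 0) ∧
    (∀ s, legendreMoment q (q + 2 * s) = 2 * momentCoeff q s) := by
  induction q using Nat.twoStepInduction with
  | zero =>
    refine ⟨fun j hj => ?_, fun j hj => absurd hj (Nat.not_lt_zero j), fun s => ?_⟩
    · simpa [legendreMoment, legendre] using integral_pow_odd (by simpa using hj)
    · simpa [legendreMoment, legendre] using integral_pow_even s
  | one =>
    have h : ∀ j, legendreMoment 1 j = ∫ x in (-1 : ℝ)..1, x ^ (1 + j) := fun j => by
      simp [legendreMoment, legendre, pow_add]
    refine ⟨fun j hj => ?_, fun j hj => ?_, fun s => ?_⟩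
    · rw [h, integral_pow_odd hj]
    · rw [h, integral_pow_odd (by rw [Nat.lt_one_iff.1 hj]; decide)]
    · rw [h, show 1 + (1 + 2 * s) = 2 * (s + 1) by ring, integral_pow_even,
        momentCoeff_zero_succ]
  | more q ih0 ih1 =>
    obtain ⟨odd0, lt0, val0⟩ := ih0
    obtain ⟨odd1, lt1, val1⟩ := ih1
    have h : (q : ℝ) + 2 ≠ 0 := by positivity
    have hodd : ∀ j, Odd (q + 2 + j) → legendreMoment (q + 2) j = 0 := fun j hj => by
      have hr := legendreMoment_rec q j
      rw [odd0 j (by grind), odd1 (j + 1) (by grind)] at hr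
      simpa [h] using hr
    refine ⟨hodd, fun j hj => ?_, fun s => ?_⟩
    · have hr := legendreMoment_rec q j
      rcases lt_trichotomy j q with hlt | rfl | hgt
      · rw [lt0 j hlt, lt1 (j + 1) (by omega)] at hr
        simpa [h] using hr
      · have v0 := val0 0
        have v1 := val1 0
        rw [mul_zero, add_zero] at v0 v1
        rw [v0, v1] at hr
        have hc := momentCoeff_rec_zero j
        refine (mul_eq_zero.1 (?_ : ((j : ℝ) + 2) * _ = 0)).resolve_left h
        linear_combination hr + 2 * hc
      · exact hodd j ⟨q + 1, by omega⟩
    · have hr := legendreMoment_rec q (q + 2 + 2 * s)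
      have v0 := val0 (s + 1)
      have v1 := val1 (s + 1)
      rw [show q + 2 * (s + 1) = q + 2 + 2 * s by ring] at v0
      rw [show q + 1 + 2 * (s + 1) = q + 2 + 2 * s + 1 by ring] at v1
      rw [v0, v1] at hr
      have hc := momentCoeff_rec q s
      refine mul_left_cancel₀ h ?_
      linear_combination hr + 2 * hc

lemma integral_legendre_mul_eq_zero {q : ℕ} {p : ℝ[X]} (hp : p.natDegree < q) :
    ∫ x in (-1 : ℝ)..1, (legendre q).eval x * p.eval x = 0 := by
  simp only [eval_eq_sum_range (p := p), mul_sum]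
  rw [intervalIntegral.integral_finsetSum fun i _ =>
    Continuous.intervalIntegrable (by fun_prop) _ _]
  refine sum_eq_zero fun j hj => ?_
  have hm : legendreMoment q j = 0 :=
    (legendre_moments q).2.1 j (by rw [mem_range] at hj; omega)
  rw [legendreMoment] at hm
  simp only [mul_left_comm _ (p.coeff j)]
  rw [intervalIntegral.integral_const_mul, hm, mul_zero]

/-- For `m ≥ k+1`, the polynomial `r_m(x) = ∑_{s=0}^{⌈(m-k)/2⌉-1} β_{m-2s,s} L_{m-2s}(x)`
satisfies: `x^m − r_m(x)` has degree at most `k`, and `r_m` is `L²([-1,1])`-orthogonal to all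
polynomials of degree at most `k`; i.e. `r_m` is the projection error `x^m − Π_k(x^m)`. -/
theorem monomial_projection_error (k m : ℕ) (hm : k + 1 ≤ m) :
    (Polynomial.X ^ m
        - ∑ s ∈ Finset.range ((m - k + 1) / 2),
            Polynomial.C (betaCoeff (m - 2 * s) s) * legendre (m - 2 * s)).degree
        ≤ (k : WithBot ℕ) ∧
    ∀ p : Polynomial ℝ, p.degree ≤ (k : WithBot ℕ) →
      ∫ x in (-1 : ℝ)..1,
          (∑ s ∈ Finset.range ((m - k + 1) / 2),
              Polynomial.C (betaCoeff (m - 2 * s) s) * legendre (m - 2 * s)).eval x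
            * p.eval x = 0 := by
  constructor
  · rw [X_pow_eq_sum_legendre m,
      ← sum_range_add_sum_Ico _ (show (m - k + 1) / 2 ≤ m / 2 + 1 by omega), add_sub_cancel_left]
    refine (degree_sum_le _ _).trans (Finset.sup_le fun s hs => ?_)
    rw [mem_Ico] at hs
    have hl := natDegree_le_iff_degree_le.2 (degree_legendre_le (m - 2 * s))
    refine natDegree_le_iff_degree_le.1 ((natDegree_C_mul_le _ _).trans ?_)
    omega
  · intro p hp
    have hp' : p.natDegree ≤ k := natDegree_le_iff_degree_le.2 hp
    simp only [eval_finsetSum, sum_mul, eval_mul, eval_C, mul_assoc]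
    rw [intervalIntegral.integral_finsetSum fun i _ =>
      Continuous.intervalIntegrable (by fun_prop) _ _]
    refine sum_eq_zero fun s hs => ?_
    rw [mem_range] at hs
    rw [intervalIntegral.integral_const_mul, integral_legendre_mul_eq_zero (by omega), mul_zero]
end

section
/- Let Ω_1,…,Ω_N ∈ ℝ^d be constant vectors, let η : ℝ^d × [0,T] → ℝ be smooth and periodic in the spatial variable, and suppose e_1,…,e_N : ℝ^d × [0,T] → ℝ are smooth functions, periodic in the spatial variable, satisfying ∂_t e_j + Ω_j·∇_x e_j = σ(ē − e_j) + η for each j, where ē = (1/W)∑_j ω_j e_j, and with zero initial data e_j(·,0) = 0 for all j. Then for every t ∈ [0,T], ( ∑_{j=1}^N ω_j ‖e_j(·,t)‖²_{L²([0,1]^d)} )^{1/2} ≤ √W · ∫_0^t ‖η(·,s)‖_{L²([0,1]^d)} ds. -/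
open MeasureTheory

/-!
The proof is the standard energy estimate. Put `E(t) = ∑ j, ω j ∫ (e j)²` over the unit cell.
Differentiating under the integral (`hasDerivAt_cell_integral`) and inserting the equation gives
three contributions to `E'`:

* the transport terms are integrals of directional derivatives of the periodic functions `(e j)²`,
  so they vanish (`integral_fderiv_periodic`, from the divergence theorem on the cell);
* the collision term is `2σ ∑ j, ω j e_j (ē - e_j) ≤ 0` by Cauchy-Schwarz;
* the source term `2 ∫ (∑ j, ω j e_j) η` is at most `2 √(W E) ‖η‖` by Cauchy-Schwarz for the sum
  and for the integral.

Hence `E' ≤ 2 √W √E ‖η‖`. As `√E` need not be differentiable where `E = 0`, the scalar comparison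
`sqrt_le_of_deriv_le` works with `√(E + ε²)` and lets `ε → 0`.
-/

/-- The derivative of a periodic function in a fixed direction has mean zero over the cell:
in the divergence theorem, the contributions of opposite faces cancel. -/
lemma integral_fderiv_periodic {d : ℕ} (hd : 1 ≤ d) (g : (Fin d → ℝ) → ℝ) (hg : ContDiff ℝ 1 g)
    (hper : ∀ x i, g (x + Pi.single i 1) = g x) (v : Fin d → ℝ) :
    ∫ x in Set.Icc (0 : Fin d → ℝ) 1, fderiv ℝ g x v = 0 := by
  obtain ⟨n, rfl⟩ : ∃ n, d = n + 1 := ⟨d - 1, by omega⟩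
  have hcont : Continuous (fderiv ℝ g) := hg.continuous_fderiv one_ne_zero
  have hsum : ∀ x, fderiv ℝ g x v = ∑ i, (v i • fderiv ℝ g x) (Pi.single i 1) := by
    intro x
    conv_lhs => rw [← Finset.univ_sum_single v]
    rw [map_sum]
    refine Finset.sum_congr rfl fun i _ => ?_
    have : (Pi.single i (v i) : Fin (n + 1) → ℝ) = v i • Pi.single i (1 : ℝ) := by
      rw [← Pi.single_smul]; simp
    rw [this, map_smul]; rfl
  simp_rw [hsum]
  rw [integral_divergence_of_hasFDerivAt_off_countable' (0 : Fin (n + 1) → ℝ) 1 zero_le_one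
    (fun i x => v i • g x) (fun i x => v i • fderiv ℝ g x) ∅ Set.countable_empty
    (fun i => (hg.continuous.const_smul (v i)).continuousOn)
    (fun x _ i => ((hg.differentiable one_ne_zero) x).hasFDerivAt.const_smul (v i))
    (by
      refine Continuous.integrableOn_Icc ?_
      refine continuous_finsetSum _ fun i _ => ?_
      exact (hcont.const_smul (v i)).clm_apply continuous_const)]
  refine Finset.sum_eq_zero fun i _ => ?_
  have hface : ∀ x : Fin n → ℝ, g (i.insertNth ((1 : Fin (n + 1) → ℝ) i) x)
      = g (i.insertNth ((0 : Fin (n + 1) → ℝ) i) x) := by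
    intro x
    rw [← hper (i.insertNth ((0 : Fin (n + 1) → ℝ) i) x) i]
    congr 1
    ext k
    refine Fin.succAboveCases i ?_ (fun l => ?_) k <;> simp
  simp only [hface, sub_self]

lemma hasDerivAt_cell_integral {d : ℕ} (F : (Fin d → ℝ) × ℝ → ℝ) (hF : ContDiff ℝ 1 F) (t : ℝ) :
    HasDerivAt (fun s => ∫ x in Set.Icc (0 : Fin d → ℝ) 1, F (x, s))
      (∫ x in Set.Icc (0 : Fin d → ℝ) 1, fderiv ℝ F (x, t) (0, 1)) t := by
  have hF' : Continuous (fun p : (Fin d → ℝ) × ℝ => fderiv ℝ F p (0, 1)) :=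
    (hF.continuous_fderiv one_ne_zero).clm_apply continuous_const
  obtain ⟨M, hM⟩ := ((isCompact_Icc (a := (0 : Fin d → ℝ)) (b := 1)).prod
    (isCompact_closedBall t 1)).exists_bound_of_continuousOn hF'.continuousOn
  refine (hasDerivAt_integral_of_dominated_loc_of_deriv_le (bound := fun _ => M)
    (F := fun s x => F (x, s)) (F' := fun s x => fderiv ℝ F (x, s) (0, 1))
    (Metric.closedBall_mem_nhds t one_pos) (Filter.Eventually.of_forall fun s => ?_) ?_ ?_
    ?_ ?_ ?_).2
  · exact (hF.continuous.comp (by fun_prop)).aestronglyMeasurable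
  · exact (hF.continuous.comp (by fun_prop : Continuous fun x => (x, t))).integrableOn_Icc
  · exact (hF'.comp (by fun_prop : Continuous fun x => (x, t))).aestronglyMeasurable
  · exact (ae_restrict_mem measurableSet_Icc).mono fun x hx s hs => hM (x, s) ⟨hx, hs⟩
  · exact (continuous_const : Continuous fun _ : Fin d → ℝ => M).integrableOn_Icc
  · refine Filter.Eventually.of_forall fun x s _ => ?_
    exact ((hF.differentiable one_ne_zero) (x, s)).hasFDerivAt.comp_hasDerivAt s
      ((hasDerivAt_const s x).prodMk (hasDerivAt_id s))

/-- Cauchy-Schwarz on the cell, from the discriminant of `r ↦ ∫ (r f + g)²`. -/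
lemma integral_mul_le_sqrt {d : ℕ} (f g : (Fin d → ℝ) → ℝ) (hf : Continuous f)
    (hg : Continuous g) :
    ∫ x in Set.Icc (0 : Fin d → ℝ) 1, f x * g x ≤
      √(∫ x in Set.Icc (0 : Fin d → ℝ) 1, f x ^ 2) *
        √(∫ x in Set.Icc (0 : Fin d → ℝ) 1, g x ^ 2) := by
  have key := discrim_le_zero (a := ∫ x in Set.Icc (0 : Fin d → ℝ) 1, f x ^ 2)
    (b := 2 * ∫ x in Set.Icc (0 : Fin d → ℝ) 1, f x * g x)
    (c := ∫ x in Set.Icc (0 : Fin d → ℝ) 1, g x ^ 2) (fun r => by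
      have h0 : 0 ≤ ∫ x in Set.Icc (0 : Fin d → ℝ) 1, (r * f x + g x) ^ 2 :=
        integral_nonneg fun x => sq_nonneg _
      have h1 : ∫ x in Set.Icc (0 : Fin d → ℝ) 1, (r * f x + g x) ^ 2
          = ∫ x in Set.Icc (0 : Fin d → ℝ) 1,
            ((r * r) * f x ^ 2 + (2 * r) * (f x * g x) + g x ^ 2) := by
        congr 1; ext x; ring
      rw [h1, integral_add, integral_add, integral_const_mul, integral_const_mul] at h0
      · linarith
      all_goals exact Continuous.integrableOn_Icc (by fun_prop))
  rw [← Real.sqrt_mul (integral_nonneg fun x => sq_nonneg _)]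
  apply Real.le_sqrt_of_sq_le
  rw [discrim] at key
  linarith

/-- If `E ≥ 0`, `E 0 = 0` and `E' ≤ 2 h √E`, then `√E` is bounded by the integral of `h`. -/
lemma sqrt_le_of_deriv_le {T : ℝ} (E E' h : ℝ → ℝ) (hE : ∀ t, HasDerivAt E (E' t) t)
    (hpos : ∀ t, 0 ≤ E t) (h0 : E 0 = 0) (hh : Continuous h) (hhpos : ∀ t, 0 ≤ h t)
    (hle : ∀ t ∈ Set.Icc 0 T, E' t ≤ 2 * (h t * √(E t))) :
    ∀ t ∈ Set.Icc 0 T, √(E t) ≤ ∫ s in (0 : ℝ)..t, h s := by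
  intro t ht
  refine le_of_forall_pos_le_add fun ε hε => ?_
  have hp : ∀ s, 0 < E s + ε ^ 2 := fun s => by have := hpos s; positivity
  have hder : ∀ s, HasDerivAt (fun s => √(E s + ε ^ 2) - ∫ r in (0 : ℝ)..s, h r)
      (E' s / (2 * √(E s + ε ^ 2)) - h s) s := fun s =>
    (((hE s).add_const _).sqrt (hp s).ne').sub (hh.integral_hasStrictDerivAt 0 s).hasDerivAt
  have hanti : AntitoneOn (fun s => √(E s + ε ^ 2) - ∫ r in (0 : ℝ)..s, h r) (Set.Icc 0 T) := by
    refine antitoneOn_of_deriv_nonpos (convex_Icc 0 T)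
      (fun s _ => (hder s).continuousAt.continuousWithinAt)
      (fun s _ => (hder s).differentiableAt.differentiableWithinAt) fun s hs => ?_
    rw [(hder s).deriv, sub_nonpos, div_le_iff₀ (by have := hp s; positivity)]
    have h1 := hle s (interior_subset hs)
    have h2 : √(E s) ≤ √(E s + ε ^ 2) := Real.sqrt_le_sqrt (by nlinarith)
    nlinarith [mul_le_mul_of_nonneg_left h2 (hhpos s)]
  have h1 := hanti ⟨le_rfl, ht.1.trans ht.2⟩ ht ht.1
  simp only [h0, zero_add, Real.sqrt_sq hε.le, intervalIntegral.integral_same, sub_zero] at h1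
  have h2 : √(E t) ≤ √(E t + ε ^ 2) := Real.sqrt_le_sqrt (by nlinarith)
  linarith

/-- For the error system `∂_t e_j + Ω_j·∇_x e_j = σ(ē − e_j) + η` with smooth spatially
periodic data and zero initial data, the weighted `L²` error is bounded by the time
integral of the `L²` norm of the residual:
`(∑_j ω_j ‖e_j(·,t)‖²)^{1/2} ≤ √W ∫_0^t ‖η(·,s)‖ ds`. -/
theorem error_l2_bound
    (d N : ℕ) (hd : 1 ≤ d) (hN : 1 ≤ N)
    (ω : Fin N → ℝ) (hω : ∀ j, 0 < ω j)
    (σ : ℝ) (hσ : 0 ≤ σ)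
    (T : ℝ) (hT : 0 < T)
    (Ω : Fin N → (Fin d → ℝ))
    (η : (Fin d → ℝ) → ℝ → ℝ)
    (hη_smooth : ContDiff ℝ (⊤ : ℕ∞) (fun p : (Fin d → ℝ) × ℝ => η p.1 p.2))
    (hη_per : ∀ (x : Fin d → ℝ) (t : ℝ) (i : Fin d), η (x + Pi.single i 1) t = η x t)
    (e : Fin N → (Fin d → ℝ) → ℝ → ℝ)
    (he_smooth : ∀ j, ContDiff ℝ (⊤ : ℕ∞) (fun p : (Fin d → ℝ) × ℝ => e j p.1 p.2))
    (he_per : ∀ j (x : Fin d → ℝ) (t : ℝ) (i : Fin d),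
      e j (x + Pi.single i 1) t = e j x t)
    (he_eq : ∀ j (x : Fin d → ℝ) (t : ℝ), t ∈ Set.Icc 0 T →
      deriv (fun s => e j x s) t + fderiv ℝ (fun y => e j y t) x (Ω j)
        = σ * ((∑ l, ω l * e l x t) / (∑ l, ω l) - e j x t) + η x t)
    (he_init : ∀ j (x : Fin d → ℝ), e j x 0 = 0) :
    ∀ t ∈ Set.Icc 0 T,
      Real.sqrt (∑ j, ω j * ∫ x in Set.Icc (0 : Fin d → ℝ) 1, (e j x t) ^ 2)
        ≤ Real.sqrt (∑ j, ω j) *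
            ∫ s in (0 : ℝ)..t,
              Real.sqrt (∫ x in Set.Icc (0 : Fin d → ℝ) 1, (η x s) ^ 2) := by
  classical
  set W := ∑ l, ω l with hWdef
  have hWpos : 0 < W := Finset.sum_pos (fun j _ => hω j) ⟨⟨0, hN⟩, Finset.mem_univ _⟩
  have hS : ∀ j, ContDiff ℝ 1 (fun p : (Fin d → ℝ) × ℝ => e j p.1 p.2) := fun j =>
    (he_smooth j).of_le (by exact_mod_cast le_top)
  have hcx : ∀ j t, ContDiff ℝ 1 (fun x => e j x t) := fun j t =>
    (hS j).comp (contDiff_id.prodMk contDiff_const)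
  have hηx : ∀ t, Continuous (fun x => η x t) := fun t =>
    hη_smooth.continuous.comp (by fun_prop : Continuous fun x => (x, t))
  have hdt : ∀ j x t, deriv (fun s => e j x s) t
      = fderiv ℝ (fun p : (Fin d → ℝ) × ℝ => e j p.1 p.2) (x, t) (0, 1) := fun j x t =>
    (((hS j).differentiable one_ne_zero (x, t)).hasFDerivAt.comp_hasDerivAt t
      ((hasDerivAt_const t x).prodMk (hasDerivAt_id t))).deriv
  have hcdt : ∀ j t, Continuous (fun x => deriv (fun s => e j x s) t) := by
    intro j t
    simp_rw [hdt]
    exact (((hS j).continuous_fderiv one_ne_zero).comp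
      (by fun_prop : Continuous fun x => (x, t))).clm_apply continuous_const
  have hcdx : ∀ j t, Continuous (fun x => fderiv ℝ (fun y => e j y t) x (Ω j)) := fun j t =>
    ((hcx j t).continuous_fderiv one_ne_zero).clm_apply continuous_const
  have hce : ∀ j t, Continuous (fun x => e j x t) := fun j t => (hcx j t).continuous
  have hE : ∀ t, HasDerivAt (fun t => ∑ j, ω j * ∫ x in Set.Icc (0 : Fin d → ℝ) 1, e j x t ^ 2)
      (∑ j, ω j * ∫ x in Set.Icc (0 : Fin d → ℝ) 1,
        2 * e j x t * deriv (fun s => e j x s) t) t := by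
    intro t
    refine HasDerivAt.fun_sum fun j _ => HasDerivAt.const_mul _ ?_
    have := hasDerivAt_cell_integral (fun p : (Fin d → ℝ) × ℝ => e j p.1 p.2 ^ 2) ((hS j).pow 2) t
    refine this.congr_deriv ?_
    congr 1; ext x
    rw [fderiv_fun_pow 2 ((hS j).differentiable one_ne_zero (x, t)), hdt]
    simp
  have htrans : ∀ j t, ∫ x in Set.Icc (0 : Fin d → ℝ) 1,
      2 * e j x t * fderiv ℝ (fun y => e j y t) x (Ω j) = 0 := by
    intro j t
    rw [← integral_fderiv_periodic hd (fun x => e j x t ^ 2) ((hcx j t).pow 2)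
      (fun x i => by simp only [he_per]) (Ω j)]
    congr 1; ext x
    rw [fderiv_fun_pow 2 ((hcx j t).differentiable one_ne_zero x)]
    simp
  have hEpos : ∀ t, 0 ≤ ∑ j, ω j * ∫ x in Set.Icc (0 : Fin d → ℝ) 1, e j x t ^ 2 := fun t =>
    Finset.sum_nonneg fun j _ => mul_nonneg (hω j).le (integral_nonneg fun x => sq_nonneg _)
  have hCS : ∀ x t, (∑ l, ω l * e l x t) ^ 2 ≤ W * ∑ l, ω l * e l x t ^ 2 := fun x t =>
    Finset.sum_sq_le_sum_mul_sum_of_sq_le_mul _ (fun l _ => (hω l).le)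
      (fun l _ => mul_nonneg (hω l).le (sq_nonneg _)) (fun l _ => le_of_eq (by ring))
  have hbound : ∀ t ∈ Set.Icc 0 T,
      (∑ j, ω j * ∫ x in Set.Icc (0 : Fin d → ℝ) 1, 2 * e j x t * deriv (fun s => e j x s) t)
      ≤ 2 * ((√W * √(∫ x in Set.Icc (0 : Fin d → ℝ) 1, η x t ^ 2)) *
        √(∑ j, ω j * ∫ x in Set.Icc (0 : Fin d → ℝ) 1, e j x t ^ 2)) := by
    intro t ht
    have hcS : Continuous (fun x => ∑ l, ω l * e l x t) :=
      continuous_finsetSum _ fun l _ => (hce l t).const_mul _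
    have hcη := hηx t
    calc _ = ∑ j, ω j * ∫ x in Set.Icc (0 : Fin d → ℝ) 1,
            2 * e j x t * (σ * ((∑ l, ω l * e l x t) / W - e j x t) + η x t) := by
          refine Finset.sum_congr rfl fun j _ => ?_
          have h1 := hcdt j t
          have h2 := hcdx j t
          have h3 := hce j t
          rw [← add_zero (∫ x in Set.Icc (0 : Fin d → ℝ) 1,
            2 * e j x t * deriv (fun s => e j x s) t), ← htrans j t, ← integral_add]
          · congr 2; ext x
            rw [← he_eq j x t ht]; ring
          all_goals exact Continuous.integrableOn_Icc (by fun_prop)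
      _ = ∫ x in Set.Icc (0 : Fin d → ℝ) 1, ∑ j, ω j *
            (2 * e j x t * (σ * ((∑ l, ω l * e l x t) / W - e j x t) + η x t)) := by
          rw [integral_finsetSum]
          · simp_rw [integral_const_mul]
          · intro j _
            have h3 := hce j t
            exact Continuous.integrableOn_Icc (by fun_prop)
      _ ≤ ∫ x in Set.Icc (0 : Fin d → ℝ) 1, 2 * ((∑ l, ω l * e l x t) * η x t) := by
          refine integral_mono ?_ ?_ fun x => ?_
          · refine Continuous.integrableOn_Icc (continuous_finsetSum _ fun j _ => ?_)
            have h3 := hce j t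
            fun_prop
          · exact Continuous.integrableOn_Icc (by fun_prop)
          · have h1 : ∑ j, ω j * (2 * e j x t * (σ * ((∑ l, ω l * e l x t) / W - e j x t) + η x t))
                = 2 * ((∑ l, ω l * e l x t) * η x t) + 2 * σ * ((∑ l, ω l * e l x t) ^ 2 / W
                  - ∑ l, ω l * e l x t ^ 2) := by
              generalize hA : (∑ l, ω l * e l x t) / W = A
              have hA' : (∑ l, ω l * e l x t) ^ 2 / W = (∑ l, ω l * e l x t) * A := by
                rw [← hA]; ring
              rw [hA', mul_sub, Finset.sum_mul, Finset.sum_mul, Finset.mul_sum, Finset.mul_sum,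
                Finset.mul_sum, ← Finset.sum_sub_distrib, ← Finset.sum_add_distrib]
              exact Finset.sum_congr rfl fun j _ => by ring
            have h2 : (∑ l, ω l * e l x t) ^ 2 / W ≤ ∑ l, ω l * e l x t ^ 2 := by
              rw [div_le_iff₀ hWpos, mul_comm]; exact hCS x t
            simp only [h1]
            nlinarith [mul_nonneg hσ (sub_nonneg.2 h2)]
      _ = 2 * ∫ x in Set.Icc (0 : Fin d → ℝ) 1, (∑ l, ω l * e l x t) * η x t :=
          integral_const_mul _ _
      _ ≤ 2 * (√(∫ x in Set.Icc (0 : Fin d → ℝ) 1, (∑ l, ω l * e l x t) ^ 2) *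
            √(∫ x in Set.Icc (0 : Fin d → ℝ) 1, η x t ^ 2)) := by
          gcongr
          exact integral_mul_le_sqrt _ _ hcS hcη
      _ ≤ 2 * (√(W * ∑ j, ω j * ∫ x in Set.Icc (0 : Fin d → ℝ) 1, e j x t ^ 2) *
            √(∫ x in Set.Icc (0 : Fin d → ℝ) 1, η x t ^ 2)) := by
          gcongr
          have hint : ∀ l ∈ Finset.univ, Integrable (fun x => ω l * e l x t ^ 2)
              (volume.restrict (Set.Icc (0 : Fin d → ℝ) 1)) := fun l _ => by
            have h3 := hce l t
            exact Continuous.integrableOn_Icc (by fun_prop)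
          have h4 : W * ∑ j, ω j * ∫ x in Set.Icc (0 : Fin d → ℝ) 1, e j x t ^ 2
              = ∫ x in Set.Icc (0 : Fin d → ℝ) 1, W * ∑ l, ω l * e l x t ^ 2 := by
            rw [integral_const_mul, integral_finsetSum _ hint]
            simp_rw [integral_const_mul]
          rw [h4]
          exact integral_mono (Continuous.integrableOn_Icc (by fun_prop))
            ((integrable_finsetSum _ hint).const_mul W) fun x => hCS x t
      _ = _ := by rw [Real.sqrt_mul hWpos.le]; ring
  have hcont : Continuous fun s => √W * √(∫ x in Set.Icc (0 : Fin d → ℝ) 1, η x s ^ 2) := by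
    refine continuous_const.mul (Real.continuous_sqrt.comp ?_)
    refine continuous_parametric_integral_of_continuous (f := fun s x => η x s ^ 2) ?_ isCompact_Icc
    exact (hη_smooth.continuous.comp continuous_swap).pow 2
  intro t ht
  rw [← intervalIntegral.integral_const_mul]
  exact sqrt_le_of_deriv_le _ _ _ hE hEpos (by simp [he_init]) hcont (fun s => by positivity)
    hbound t ht
end
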